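/- For every facet γ of Γ (a face of dimension n − 1) there exists a unique primitive vector w ∈ ℕ^n ∖ {0} such that γ = γ_w. -/

import Mathlib

/-!
Let `γ = γ_a` be a facet. Since `Γ` has dimension `n`, `a ≠ 0`; as `⟨a, ·⟩` is constant on `γ` and
`γ` has dimension `n - 1`, the direction of the affine span of `γ` is exactly the hyperplane `a^⊥`.
Hence any functional constant on `γ` is proportional to `a` (`proportional_of_const`). This gives
uniqueness at once, because proportional primitive vectors in `ℕ^n` are equal.

For existence the point is that `a` is proportional to a rational vector. Choose a `ℚ`-linear map
`φ : ℝ → ℚ` with `φ (a j) = 1` for some `j` with `a j > 0`, and apply it to the coordinates of `a`.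
The resulting rational vector is again constant on `γ` (`dotR_map_const_on_face`): a point of `γ`
is a convex combination of points `α + v` with `α ∈ S`, `⟨a, α⟩ = l_Γ(a)` and `v ≥ 0` supported
where `a` vanishes, and `φ` commutes with pairing against the lattice point `α`. So that vector
equals `(a j)⁻¹ • a`; clearing denominators and dividing by the gcd yields `w`, and `γ_w = γ_a`
because faces are invariant under positive scaling of the normal.
-/

open Finset Set Pointwise

noncomputable section

/-- Standard inner product on `ℝ^n`. -/
def dotR {n : ℕ} (a b : Fin n → ℝ) : ℝ := ∑ i, a i * b i

/-- The nonnegative orthant `ℝ_{≥0}^n`. -/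
def nonnegOrthant (n : ℕ) : Set (Fin n → ℝ) := {x | ∀ i, 0 ≤ x i}

/-- Coercion of an integer lattice point to `ℝ^n`. -/
def natCastVec {n : ℕ} (α : Fin n → ℕ) : Fin n → ℝ := fun i => (α i : ℝ)

/-- The Newton polyhedron of a finite set `S ⊆ ℕ^n`: the convex hull of `S + ℝ_{≥0}^n`. -/
def newtonPolyhedron {n : ℕ} (S : Finset (Fin n → ℕ)) : Set (Fin n → ℝ) :=
  convexHull ℝ {x | ∃ α ∈ S, ∃ v ∈ nonnegOrthant n, x = natCastVec α + v}

/-- `l_Γ(a) = inf {⟨a,b⟩ : b ∈ Γ}`. -/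
def lGamma {n : ℕ} (S : Finset (Fin n → ℕ)) (a : Fin n → ℝ) : ℝ :=
  sInf ((fun b => dotR a b) '' newtonPolyhedron S)

/-- `γ_a = {b ∈ Γ : ⟨a,b⟩ = l_Γ(a)}`. -/
def faceAt {n : ℕ} (S : Finset (Fin n → ℕ)) (a : Fin n → ℝ) : Set (Fin n → ℝ) :=
  {b ∈ newtonPolyhedron S | dotR a b = lGamma S a}

/-- A face of `Γ` is a set of the form `γ_a` with `a ∈ ℝ_{≥0}^n`. -/
def IsFaceOf {n : ℕ} (S : Finset (Fin n → ℕ)) (γ : Set (Fin n → ℝ)) : Prop :=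
  ∃ a ∈ nonnegOrthant n, γ = faceAt S a

/-- A proper face is a face different from `Γ`. -/
def IsProperFaceOf {n : ℕ} (S : Finset (Fin n → ℕ)) (γ : Set (Fin n → ℝ)) : Prop :=
  IsFaceOf S γ ∧ γ ≠ newtonPolyhedron S

/-- `σ(γ) = {a ∈ ℝ_{≥0}^n : γ_a = γ}`. -/
def sigmaCone {n : ℕ} (S : Finset (Fin n → ℕ)) (γ : Set (Fin n → ℝ)) : Set (Fin n → ℝ) :=
  {a ∈ nonnegOrthant n | faceAt S a = γ}

/-- `σ̄(γ)`, the closure of `σ(γ)` in `ℝ^n`. -/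
def sigmaConeCl {n : ℕ} (S : Finset (Fin n → ℕ)) (γ : Set (Fin n → ℝ)) : Set (Fin n → ℝ) :=
  closure (sigmaCone S γ)

/-- `F` is a face of the closed convex cone `C`: `F = {x ∈ C | λ x = 0}` for a linear form
`λ` nonnegative on `C`. -/
def IsConeFaceOf {n : ℕ} (C F : Set (Fin n → ℝ)) : Prop :=
  ∃ lam : (Fin n → ℝ) →ₗ[ℝ] ℝ, (∀ x ∈ C, 0 ≤ lam x) ∧ F = {x ∈ C | lam x = 0}

/-- The dimension of a subset of `ℝ^n`: the dimension of its affine span. -/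
def dimSet {n : ℕ} (s : Set (Fin n → ℝ)) : ℕ :=
  Module.finrank ℝ (affineSpan ℝ s).direction

/-- `ℝ_{≥0}^I = {x ∈ ℝ_{≥0}^n : x_i = 0 for i ∉ I}`. -/
def orthantOn (n : ℕ) (I : Set (Fin n)) : Set (Fin n → ℝ) :=
  {x | (∀ i, 0 ≤ x i) ∧ ∀ i ∉ I, x i = 0}

/-- `ℝ_{≥0}^{n₁} × ℝ_{>0}^{n₂} = {a ∈ ℝ_{≥0}^n : a_i > 0 for i > n₁}`. -/
def mixedOrthant (n n₁ : ℕ) : Set (Fin n → ℝ) :=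
  {x | (∀ i, 0 ≤ x i) ∧ ∀ i : Fin n, n₁ ≤ (i : ℕ) → 0 < x i}

/-! ### Functionals constant on a set of codimension one -/

/-- The functional `x ↦ ⟨a, x⟩` as a linear map. -/
def dotLin {n : ℕ} (a : Fin n → ℝ) : (Fin n → ℝ) →ₗ[ℝ] ℝ where
  toFun := dotR a
  map_add' x y := by simp [dotR, mul_add, Finset.sum_add_distrib]
  map_smul' c x := by
    simp only [dotR, Pi.smul_apply, smul_eq_mul, RingHom.id_apply, Finset.mul_sum]
    exact Finset.sum_congr rfl fun i _ => by ring

lemma dotLin_apply {n : ℕ} (a x : Fin n → ℝ) : dotLin a x = dotR a x := rfl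

lemma dotR_add {n : ℕ} (a x y : Fin n → ℝ) : dotR a (x + y) = dotR a x + dotR a y :=
  (dotLin a).map_add x y

lemma dotR_smul {n : ℕ} (a : Fin n → ℝ) (c : ℝ) (x : Fin n → ℝ) :
    dotR a (c • x) = c * dotR a x :=
  (dotLin a).map_smul c x

lemma dotR_single {n : ℕ} (a : Fin n → ℝ) (i : Fin n) (c : ℝ) :
    dotR a (Pi.single i c) = a i * c := by
  simp [dotR, Pi.single_apply]

lemma dotLin_ne_zero {n : ℕ} {a : Fin n → ℝ} (ha : a ≠ 0) : dotLin a ≠ 0 := by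
  obtain ⟨i, hi⟩ := Function.ne_iff.mp ha
  intro h
  have := LinearMap.congr_fun h (Pi.single i 1)
  rw [dotLin_apply, dotR_single] at this
  simp_all

/-- A functional that is constant on a set vanishes on the direction of its affine span. -/
lemma direction_le_ker {n : ℕ} {b : Fin n → ℝ} {γ : Set (Fin n → ℝ)} {d : ℝ}
    (hb : ∀ x ∈ γ, dotR b x = d) :
    (affineSpan ℝ γ).direction ≤ LinearMap.ker (dotLin b) := by
  rw [direction_affineSpan, vectorSpan_def, Submodule.span_le]
  rintro _ ⟨x, hx, y, hy, rfl⟩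
  simp only [vsub_eq_sub, SetLike.mem_coe, LinearMap.mem_ker, map_sub, dotLin_apply, hb x hx,
    hb y hy, sub_self]

/-- Two functionals constant on a set of dimension `n - 1` are proportional, as long as one of
them is nonzero: the direction of the set is then the full kernel of that one. -/
lemma proportional_of_const {n : ℕ} {a b : Fin n → ℝ} {γ : Set (Fin n → ℝ)} {c d : ℝ}
    (ha0 : a ≠ 0) (hdim : dimSet γ = n - 1)
    (ha : ∀ x ∈ γ, dotR a x = c) (hb : ∀ x ∈ γ, dotR b x = d) (i j : Fin n) :
    a j * b i = a i * b j := by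
  have hker : Module.finrank ℝ (LinearMap.ker (dotLin a)) + 1 = n := by
    simpa using Module.Dual.finrank_ker_add_one_of_ne_zero (dotLin_ne_zero ha0)
  have heq : (affineSpan ℝ γ).direction = LinearMap.ker (dotLin a) := by
    refine Submodule.eq_of_le_of_finrank_eq (direction_le_ker ha) ?_
    change dimSet γ = _
    omega
  have hle := heq ▸ direction_le_ker hb
  have hmem : Pi.single i (a j) - Pi.single j (a i) ∈ LinearMap.ker (dotLin a) := by
    simp only [LinearMap.mem_ker, map_sub, dotLin_apply, dotR_single]
    ring
  have := hle hmem
  simp only [LinearMap.mem_ker, map_sub, dotLin_apply, dotR_single] at this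
  linarith

/-! ### The Newton polyhedron and its faces -/

lemma dotR_nonneg {n : ℕ} {a x : Fin n → ℝ} (ha : a ∈ nonnegOrthant n)
    (hx : x ∈ nonnegOrthant n) : 0 ≤ dotR a x :=
  Finset.sum_nonneg fun i _ => mul_nonneg (ha i) (hx i)

lemma newtonPolyhedron_nonneg {n : ℕ} (S : Finset (Fin n → ℕ)) :
    newtonPolyhedron S ⊆ nonnegOrthant n := by
  refine convexHull_min ?_ ?_
  · rintro _ ⟨α, -, v, hv, rfl⟩ i
    exact add_nonneg (Nat.cast_nonneg _) (hv i)
  · intro x hx y hy s t hs ht _ i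
    exact add_nonneg (mul_nonneg hs (hx i)) (mul_nonneg ht (hy i))

lemma lGamma_le {n : ℕ} (S : Finset (Fin n → ℕ)) {a x : Fin n → ℝ} (ha : a ∈ nonnegOrthant n)
    (hx : x ∈ newtonPolyhedron S) : lGamma S a ≤ dotR a x := by
  refine csInf_le ⟨0, ?_⟩ ⟨x, hx, rfl⟩
  rintro _ ⟨y, hy, rfl⟩
  exact dotR_nonneg ha (newtonPolyhedron_nonneg S hy)

lemma add_mem_newtonPolyhedron {n : ℕ} {S : Finset (Fin n → ℕ)} {α : Fin n → ℕ} (hα : α ∈ S)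
    {v : Fin n → ℝ} (hv : v ∈ nonnegOrthant n) : natCastVec α + v ∈ newtonPolyhedron S :=
  subset_convexHull ℝ _ ⟨α, hα, v, hv, rfl⟩

/-- Applying a `ℚ`-linear map `φ : ℝ → ℚ` to the coordinates of `a` commutes with pairing against
lattice points. -/
lemma dotR_map_natCastVec {n : ℕ} (φ : ℝ →ₗ[ℚ] ℚ) (a : Fin n → ℝ) (α : Fin n → ℕ) :
    dotR (fun i => (φ (a i) : ℝ)) (natCastVec α) = φ (dotR a (natCastVec α)) := by
  have h : ∀ i, φ (a i * (α i : ℝ)) = φ (a i) * α i := fun i => by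
    rw [mul_comm, ← nsmul_eq_mul, map_nsmul, nsmul_eq_mul, mul_comm]
  simp [dotR, natCastVec, map_sum, h]

/-- The coordinatewise image of `a` under a `ℚ`-linear map `φ : ℝ → ℚ` is constant on the face
`γ_a`, with value `φ (l_Γ(a))`. -/
lemma dotR_map_const_on_face {n : ℕ} (S : Finset (Fin n → ℕ)) {a : Fin n → ℝ}
    (ha : a ∈ nonnegOrthant n) (φ : ℝ →ₗ[ℚ] ℚ) {x : Fin n → ℝ} (hx : x ∈ faceAt S a) :
    dotR (fun i => (φ (a i) : ℝ)) x = φ (lGamma S a) := by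
  -- The implication alone is not a convex condition on `x`; joined with the bound `l ≤ ⟨a, x⟩` it is.
  suffices h : newtonPolyhedron S ⊆ {x | lGamma S a ≤ dotR a x ∧
      (dotR a x = lGamma S a → dotR (fun i => (φ (a i) : ℝ)) x = φ (lGamma S a))} from
    (h hx.1).2 hx.2
  refine convexHull_min ?_ ?_
  · rintro _ ⟨α, hα, v, hv, rfl⟩
    refine ⟨lGamma_le S ha (add_mem_newtonPolyhedron hα hv), fun h => ?_⟩
    have h1 : lGamma S a ≤ dotR a (natCastVec α) := by
      simpa using lGamma_le S ha (add_mem_newtonPolyhedron hα (v := 0) fun _ => le_rfl)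
    have h2 := dotR_nonneg ha hv
    rw [dotR_add] at h
    have hv0 : dotR a v = 0 := by linarith
    have hz := (Finset.sum_eq_zero_iff_of_nonneg fun i _ => mul_nonneg (ha i) (hv i)).mp hv0
    have hw : dotR (fun i => (φ (a i) : ℝ)) v = 0 := by
      refine Finset.sum_eq_zero fun i hi => ?_
      rcases mul_eq_zero.mp (hz i hi) with h0 | h0 <;> simp [h0]
    rw [dotR_add, hw, dotR_map_natCastVec, add_zero, show dotR a (natCastVec α) = lGamma S a by
      linarith]
  · rintro x ⟨hx1, hx2⟩ y ⟨hy1, hy2⟩ s t hs ht hst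
    simp only [Set.mem_ofPred_eq, dotR_add, dotR_smul]
    have e : lGamma S a = s * lGamma S a + t * lGamma S a := by rw [← add_mul, hst, one_mul]
    have hsx := mul_le_mul_of_nonneg_left hx1 hs
    have hty := mul_le_mul_of_nonneg_left hy1 ht
    refine ⟨by linarith, fun h => ?_⟩
    have hx3 : s * dotR a x = s * lGamma S a := by linarith
    have hy3 : t * dotR a y = t * lGamma S a := by linarith
    have key : ∀ {r p q : ℝ}, r * p = r * lGamma S a →
        (p = lGamma S a → q = φ (lGamma S a)) → r * q = r * φ (lGamma S a) := by
      intro r p q h1 h2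
      rcases mul_eq_mul_left_iff.mp h1 with h | h
      · rw [h2 h]
      · simp [h]
    rw [key hx3 hx2, key hy3 hy2, ← add_mul, hst, one_mul]

lemma faceAt_smul {n : ℕ} (S : Finset (Fin n → ℕ)) (a : Fin n → ℝ) {c : ℝ} (hc : 0 < c) :
    faceAt S (c • a) = faceAt S a := by
  have hdot : ∀ x, dotR (c • a) x = c * dotR a x := fun x => by
    simp [dotR, Finset.mul_sum, mul_assoc]
  have hl : lGamma S (c • a) = c * lGamma S a := by
    rw [lGamma, lGamma, ← smul_eq_mul, ← Real.sInf_smul_of_nonneg hc.le, ← Set.image_smul,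
      Set.image_image]
    simp [hdot]
  ext x
  simp [faceAt, hdot, hl, hc.ne']

lemma faceAt_zero {n : ℕ} {S : Finset (Fin n → ℕ)} (hS : S.Nonempty) :
    faceAt S 0 = newtonPolyhedron S := by
  obtain ⟨α, hα⟩ := hS
  have hne : (newtonPolyhedron S).Nonempty :=
    ⟨_, add_mem_newtonPolyhedron hα (v := 0) fun _ => le_rfl⟩
  have : lGamma S 0 = 0 := by simp [lGamma, dotR, hne.image_const]
  ext x
  simp [faceAt, this, dotR]

lemma dimSet_newtonPolyhedron {n : ℕ} {S : Finset (Fin n → ℕ)} (hS : S.Nonempty) :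
    dimSet (newtonPolyhedron S) = n := by
  obtain ⟨α, hα⟩ := hS
  have : (affineSpan ℝ (newtonPolyhedron S)).direction = ⊤ := by
    rw [eq_top_iff, ← (Pi.basisFun ℝ (Fin n)).span_eq, Submodule.span_le]
    rintro _ ⟨i, rfl⟩
    have h := vsub_mem_vectorSpan ℝ
      (add_mem_newtonPolyhedron hα (v := Pi.single i (1 : ℝ)) fun j => by
        by_cases h : j = i <;> simp [h])
      (add_mem_newtonPolyhedron hα (v := 0) fun _ => le_rfl)
    rw [direction_affineSpan]
    simpa using h
  rw [dimSet, this, finrank_top, Module.finrank_fin_fun]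

/-! ### Primitive vectors -/

/-- A nonzero nonnegative rational vector is a positive multiple of a primitive one. -/
lemma exists_primitive {n : ℕ} {q : Fin n → ℚ} (hq : ∀ i, 0 ≤ q i) (hq0 : q ≠ 0) :
    ∃ w : Fin n → ℕ, Finset.univ.gcd w = 1 ∧ ∃ c : ℚ, 0 < c ∧ ∀ i, (w i : ℚ) = c * q i := by
  have hN : 0 < ∏ i, (q i).den := Finset.prod_pos fun i _ => (q i).den_pos
  have hm : ∀ i, ∃ m : ℕ, (m : ℚ) = (∏ i, (q i).den : ℕ) * q i := by
    intro i
    obtain ⟨k, hk⟩ := Finset.dvd_prod_of_mem (fun i => (q i).den) (Finset.mem_univ i)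
    refine ⟨k * (q i).num.toNat, ?_⟩
    have hnum : (((q i).num.toNat : ℕ) : ℚ) = (q i).num := by
      exact_mod_cast Int.toNat_of_nonneg (Rat.num_nonneg.mpr (hq i))
    rw [hk, Nat.cast_mul, Nat.cast_mul, hnum, ← Rat.den_mul_eq_num]
    ring
  choose m hm using hm
  obtain ⟨i, hi⟩ := Function.ne_iff.mp hq0
  obtain ⟨w, hw, hg⟩ := Finset.extract_gcd m ⟨i, Finset.mem_univ i⟩
  have hg0 : Finset.univ.gcd m ≠ 0 := by
    intro h
    have h0 : (m i : ℚ) = 0 := by exact_mod_cast Finset.gcd_eq_zero_iff.mp h i (Finset.mem_univ i)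
    rw [hm] at h0
    exact mul_ne_zero (by exact_mod_cast hN.ne') hi h0
  have hgpos : (0 : ℚ) < (Finset.univ.gcd m : ℕ) := by exact_mod_cast Nat.pos_of_ne_zero hg0
  refine ⟨w, hg, (∏ i, (q i).den : ℕ) / (Finset.univ.gcd m : ℕ),
    div_pos (by exact_mod_cast hN) hgpos, fun i => ?_⟩
  have h : (m i : ℚ) = (Finset.univ.gcd m : ℕ) * w i := by exact_mod_cast hw i (Finset.mem_univ i)
  rw [hm] at h
  field_simp
  linarith

/-- Proportional primitive vectors are equal: take the gcd over `i` in `u j * v i = u i * v j`. -/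
lemma primitive_eq_of_proportional {n : ℕ} {u v : Fin n → ℕ} (hu0 : u ≠ 0)
    (hu : Finset.univ.gcd u = 1) (hv : Finset.univ.gcd v = 1)
    (h : ∀ i j, u j * v i = u i * v j) : v = u := by
  obtain ⟨j, hj⟩ := Function.ne_iff.mp hu0
  have h1 : u j = v j := by
    have h2 := Finset.gcd_mul_left (s := Finset.univ) (f := v) (a := u j)
    have h3 := Finset.gcd_mul_right (s := Finset.univ) (f := u) (a := v j)
    rw [Finset.gcd_congr rfl fun i _ => h i j, h3] at h2
    simpa [hu, hv] using h2.symm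
  funext i
  have h2 := h i j
  rw [← h1, mul_comm (u i)] at h2
  exact Nat.eq_of_mul_eq_mul_left (Nat.pos_of_ne_zero hj) h2

/-! ### Facet normals -/

theorem facet_unique_primitive_normal {n : ℕ} (hn : 1 ≤ n)
    (S : Finset (Fin n → ℕ)) (hS : S.Nonempty) (hS0 : (0 : Fin n → ℕ) ∉ S)
    (γ : Set (Fin n → ℝ)) (hγ : IsFaceOf S γ) (hdim : dimSet γ = n - 1) :
    ∃! w : Fin n → ℕ, w ≠ 0 ∧ Finset.univ.gcd w = 1 ∧ γ = faceAt S (natCastVec w) := by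
  refine existsUnique_of_exists_of_unique ?_ ?_
  · obtain ⟨a, ha, rfl⟩ := hγ
    have ha0 : a ≠ 0 := by
      rintro rfl
      rw [faceAt_zero hS, dimSet_newtonPolyhedron hS] at hdim
      omega
    obtain ⟨j, hj⟩ := Function.ne_iff.mp ha0
    have hjpos : 0 < a j := lt_of_le_of_ne (ha j) (Ne.symm hj)
    -- A `ℚ`-linear form on `ℝ` normalised at one nonzero coordinate of `a`.
    obtain ⟨φ, hφ⟩ : ∃ φ : ℝ →ₗ[ℚ] ℚ, φ (a j) = 1 := Module.Projective.exists_dual_eq_one ℚ hj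
    have hprop : ∀ i, (φ (a i) : ℝ) = (a j)⁻¹ * a i := by
      intro i
      have h := proportional_of_const ha0 hdim (fun x hx => hx.2)
        (fun x hx => dotR_map_const_on_face S ha φ hx) i j
      simp only [hφ, Rat.cast_one, mul_one] at h
      rw [eq_inv_mul_iff_mul_eq₀ hjpos.ne', h]
    obtain ⟨w, hg, c, hc, hw⟩ := exists_primitive (q := fun i => φ (a i))
      (fun i => by
        have : (0 : ℝ) ≤ φ (a i) := hprop i ▸ mul_nonneg (inv_nonneg.mpr hjpos.le) (ha i)
        exact_mod_cast this)
      (Function.ne_iff.mpr ⟨j, by simp [hφ]⟩)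
    have hwa : natCastVec w = ((c : ℝ) * (a j)⁻¹) • a := by
      funext i
      have : (w i : ℝ) = c * φ (a i) := by exact_mod_cast hw i
      simp [natCastVec, this, hprop, mul_assoc]
    refine ⟨w, ?_, hg, ?_⟩
    · rintro rfl
      have := hw j
      simp [hφ, hc.ne] at this
    · rw [hwa, faceAt_smul S a (mul_pos (by exact_mod_cast hc) (inv_pos.mpr hjpos))]
  · rintro u v ⟨hu0, hu, hγu⟩ ⟨hv0, hv, hγv⟩
    refine (primitive_eq_of_proportional hu0 hu hv fun i j => ?_).symm
    have hu0' : natCastVec u ≠ 0 := fun h => hu0 <| by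
      funext i
      simpa [natCastVec] using congrFun h i
    have h := proportional_of_const hu0' hdim (fun x hx => (hγu ▸ hx : x ∈ faceAt S _).2)
      (fun x hx => (hγv ▸ hx : x ∈ faceAt S _).2) i j
    simp only [natCastVec] at h
    exact_mod_cast h
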